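/- Let 0 < p < ∞ and let Φ : [0,∞) → [0,∞) be an increasing differentiable function with Φ(0) = 0 satisfying: (i) the global Δ₂-condition Φ(2t) ≤ C₁Φ(t) for all t ≥ 0; (ii) sup_{t>0} tΦ′(t)/Φ(t) < ∞; (iii) ∫_0^t s^{−p}Φ(s) ds/s ≤ C₂ t^{−p}Φ(t) for all t > 0. Let α > 0, let f be a nonnegative measurable function on ℝ₊ and let g be a measurable function on ℝ₊ such that d(αv; g) ≤ d(v; Θ_{p,∞}(f)) for all v > 0. Then ∫_0^∞ Φ(|g(t)|) dt ≤ K ∫_0^∞ Φ(f(t)) dt, where K is a constant depending only on Φ (i.e. on C₁, C₂ and the supremum in (ii)), p and α. -/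

import Mathlib

/-!
The proof is two applications of Tonelli's theorem, with no integration by parts.

By `Δ₂` and monotonicity, `Φ x ≤ 2 C₁ ∫₀ˣ Φ(s) ds/s` (keep only `s ∈ (x/2, x)`): this is
`phi_le_lintegral`. Iterating `Δ₂` also gives `Φ x ≤ B Φ(x/α)` (`exists_dilation_bound`). Hence, by
Tonelli,
`∫ Φ(|g|) ≤ 2 B C₁ ∫₀^∞ (Φ(v)/v) d(αv; g) dv ≤ 2 B C₁ ∫₀^∞ (Φ(v)/v) d(v; Θ f) dv`.

For fixed `x`, the set of `t > 0` with `f(x) θ(t) > v` is empty if `f(x) ≤ v` and is contained in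
`(0, (f(x)/v)^p)` otherwise (`lebR2_le`), so that `d(v; Θ f) ≤ ∫_{f > v} (f(x)/v)^p dx`. A second
use of Tonelli bounds the last integral by `∫ f(x)^p ∫₀^{f(x)} v^{-p} Φ(v) dv/v dx`, which is at
most `C₂ ∫ Φ(f)` by the integral condition on `Φ`.
-/

open MeasureTheory Set ENNReal

/-- Lebesgue measure on `ℝ₊ = (0,∞)`. -/
noncomputable def lebR : Measure ℝ := volume.restrict (Ioi (0:ℝ))

/-- Product Lebesgue measure on `ℝ₊ × ℝ₊`. -/
noncomputable def lebR2 : Measure (ℝ × ℝ) := lebR.prod lebR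

/-- `θ_{p,∞}(t) = 1_{(0,1)}(t) + t^{-1/p}·1_{[1,∞)}(t)`. -/
noncomputable def thetaPInf (p : ℝ) : ℝ → ℝ := fun t =>
  (Ioo (0:ℝ) 1).indicator 1 t + (Ici (1:ℝ)).indicator (fun t => t ^ (-(1/p))) t

instance : SFinite lebR := by unfold lebR; infer_instance

/-- Iterated `Δ₂`: dilating the argument by a fixed factor costs only a constant. -/
lemma exists_dilation_bound (Φ : ℝ → ℝ) (hmono : MonotoneOn Φ (Ici (0:ℝ)))
    (A : ℝ) (hA : 0 < A) (hΔ : ∀ t ≥ (0:ℝ), Φ (2 * t) ≤ A * Φ t) (α : ℝ) (hα : 0 < α) :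
    ∃ B > (0:ℝ), ∀ x ≥ (0:ℝ), Φ x ≤ B * Φ (x / α) := by
  obtain ⟨n, hn⟩ := pow_unbounded_of_one_lt α (one_lt_two)
  have key : ∀ m : ℕ, ∀ y ≥ (0:ℝ), Φ (2 ^ m * y) ≤ A ^ m * Φ y := by
    intro m
    induction m with
    | zero => intro y _; simp
    | succ k ih =>
      intro y hy
      calc Φ (2 ^ (k+1) * y) = Φ (2 * (2 ^ k * y)) := by ring_nf
        _ ≤ A * Φ (2 ^ k * y) := hΔ _ (by positivity)
        _ ≤ A * (A ^ k * Φ y) := by gcongr; exact ih y hy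
        _ = A ^ (k+1) * Φ y := by ring
  refine ⟨A ^ n, by positivity, fun x hx => ?_⟩
  refine le_trans (hmono hx ?_ ?_) (key n (x / α) (by positivity))
  · exact mem_Ici.2 (by positivity)
  · calc x = α * (x / α) := by field_simp
      _ ≤ 2 ^ n * (x / α) := by gcongr

/-- `Φ x ≲ ∫₀ˣ Φ(s) ds/s`, since on `(x/2, x)` the integrand is at least `Φ(x/2)/x`. -/
lemma phi_le_lintegral (Φ : ℝ → ℝ) (hmono : MonotoneOn Φ (Ici (0:ℝ))) (h0 : Φ 0 = 0)
    (A : ℝ) (hA : 0 < A) (hΔ : ∀ t ≥ (0:ℝ), Φ (2 * t) ≤ A * Φ t) (x : ℝ) (hx : 0 ≤ x) :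
    ENNReal.ofReal (Φ x) ≤
      ENNReal.ofReal (2 * A) * ∫⁻ s in Ioo (0:ℝ) x, ENNReal.ofReal (Φ s / s) := by
  rcases hx.eq_or_lt with rfl | hx
  · simp [h0]
  have hnn : 0 ≤ Φ (x / 2) := by
    rw [← h0]; exact hmono (by simp) (mem_Ici.2 (by positivity)) (by positivity)
  have hlow : ENNReal.ofReal (Φ (x/2) / 2) ≤ ∫⁻ s in Ioo (0:ℝ) x, ENNReal.ofReal (Φ s / s) := by
    calc ENNReal.ofReal (Φ (x/2) / 2)
        = ∫⁻ s in Ioo (x/2) x, ENNReal.ofReal (Φ (x/2) / x) := by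
          rw [setLIntegral_const, Real.volume_Ioo, ← ENNReal.ofReal_mul (by positivity)]
          congr 1; field_simp; ring
      _ ≤ ∫⁻ s in Ioo (x/2) x, ENNReal.ofReal (Φ s / s) := by
          refine setLIntegral_mono' measurableSet_Ioo fun s hs => ?_
          have hs0 : 0 < s := by linarith [hs.1]
          have := hmono (mem_Ici.2 (by positivity : 0 ≤ x/2)) (mem_Ici.2 hs0.le) hs.1.le
          apply ENNReal.ofReal_le_ofReal
          exact div_le_div₀ (hnn.trans this) this hs0 hs.2.le
      _ ≤ _ := lintegral_mono_set (Ioo_subset_Ioo_left (by positivity))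
  calc ENNReal.ofReal (Φ x) ≤ ENNReal.ofReal (2 * A * (Φ (x/2) / 2)) := by
        apply ENNReal.ofReal_le_ofReal
        have := hΔ (x/2) (by positivity)
        rw [mul_div_cancel₀ x two_ne_zero] at this
        linarith
    _ = ENNReal.ofReal (2 * A) * ENNReal.ofReal (Φ (x/2) / 2) :=
        ENNReal.ofReal_mul (by positivity)
    _ ≤ _ := by gcongr

lemma measurable_thetaPInf (p : ℝ) : Measurable (thetaPInf p) := by
  unfold thetaPInf
  refine (measurable_one.indicator measurableSet_Ioo).add ?_
  exact Measurable.indicator (by fun_prop) measurableSet_Ici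

/-- The superlevel sets of `y θ_{p,∞}` are contained in `(0, (y/v)^p)`, and empty for `y ≤ v`. -/
lemma of_lt_mul_theta {p : ℝ} (hp : 0 < p) {y v t : ℝ} (hy : 0 ≤ y) (hv : 0 < v) (ht : 0 < t)
    (h : v < |y * thetaPInf p t|) : v < y ∧ t < (y / v) ^ p := by
  rcases lt_or_ge t 1 with h1 | h1
  · have : thetaPInf p t = 1 := by simp [thetaPInf, ht, h1]
    rw [this, mul_one, abs_of_nonneg hy] at h
    refine ⟨h, h1.trans ?_⟩
    exact Real.one_lt_rpow ((one_lt_div hv).2 h) hp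
  · have : thetaPInf p t = t ^ (-(1/p)) := by simp [thetaPInf, h1]
    rw [this, abs_of_nonneg (by positivity), Real.rpow_neg ht.le, ← div_eq_mul_inv,
      lt_div_iff₀ (by positivity)] at h
    have h2 : (1:ℝ) ≤ t ^ (1/p) := Real.one_le_rpow h1 (by positivity)
    refine ⟨by nlinarith, ?_⟩
    have h3 : t ^ (1/p) < y / v := by rw [lt_div_iff₀ hv]; linarith
    have h4 := Real.rpow_lt_rpow (by positivity) h3 hp
    rwa [← Real.rpow_mul ht.le, one_div_mul_cancel hp.ne', Real.rpow_one] at h4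

/-- The distribution function of `Θ_{p,∞} f` at `v` is at most `∫_{f > v} (f/v)^p`. -/
lemma lebR2_le {p : ℝ} (hp : 0 < p) {f : ℝ → ℝ} (hf : Measurable f) (hf0 : 0 ≤ f) {v : ℝ}
    (hv : 0 < v) :
    lebR2 {st : ℝ × ℝ | v < |f st.1 * thetaPInf p st.2|} ≤
      ∫⁻ x, {x | v < f x}.indicator (fun x => ENNReal.ofReal ((f x / v) ^ p)) x ∂lebR := by
  have hθ := measurable_thetaPInf p
  have hms : MeasurableSet {st : ℝ × ℝ | v < |f st.1 * thetaPInf p st.2|} :=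
    measurableSet_lt measurable_const
      (((hf.comp measurable_fst).mul (hθ.comp measurable_snd)).abs)
  rw [lebR2, Measure.prod_apply hms]
  refine lintegral_mono fun x => ?_
  have hms' := measurable_prodMk_left (x := x) hms
  rw [show lebR (Prod.mk x ⁻¹' {st : ℝ × ℝ | v < |f st.1 * thetaPInf p st.2|}) =
    volume ((Prod.mk x ⁻¹' {st : ℝ × ℝ | v < |f st.1 * thetaPInf p st.2|}) ∩ Ioi 0) from
    Measure.restrict_apply hms']
  by_cases hx : v < f x
  · rw [indicator_of_mem (by exact hx)]
    calc _ ≤ volume (Ioo 0 ((f x / v) ^ p)) := measure_mono fun t ht =>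
          ⟨ht.2, (of_lt_mul_theta hp (hf0 x) hv ht.2 ht.1).2⟩
      _ = _ := by simp
  · rw [indicator_of_notMem (by exact hx)]
    refine le_of_eq ?_
    convert measure_empty (μ := volume)
    ext t
    simp only [mem_inter_iff, mem_empty_iff_false, iff_false]
    exact fun ht => hx (of_lt_mul_theta hp (hf0 x) hv ht.2 ht.1).1

/-- The weight `v ↦ Φ(v)/v`, with `Φ` replaced by the globally monotone (hence measurable)
function `v ↦ Φ(max v 0)`. -/
noncomputable def weight (Φ : ℝ → ℝ) (v : ℝ) : ℝ≥0∞ := ENNReal.ofReal (Φ (max v 0) / v)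

lemma measurable_max_comp {Φ : ℝ → ℝ} (hmono : MonotoneOn Φ (Ici (0:ℝ))) :
    Measurable fun v => Φ (max v 0) := by
  refine Monotone.measurable fun a b hab => ?_
  exact hmono (mem_Ici.2 (le_max_right _ _)) (mem_Ici.2 (le_max_right _ _))
    (max_le_max_right 0 hab)

lemma measurable_weight {Φ : ℝ → ℝ} (hmono : MonotoneOn Φ (Ici (0:ℝ))) :
    Measurable (weight Φ) :=
  ((measurable_max_comp hmono).div measurable_id).ennreal_ofReal

/-- An integral over `(0, x)` as an integral over `(0, ∞)` of an indicator. -/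
lemma setLIntegral_Ioo_eq (h : ℝ → ℝ≥0∞) (x : ℝ) :
    ∫⁻ s in Ioo (0:ℝ) x, h s = ∫⁻ s, (Iio x).indicator h s ∂lebR := by
  rw [lintegral_indicator measurableSet_Iio, lebR, Measure.restrict_restrict measurableSet_Iio,
    inter_comm, Ioi_inter_Iio]

/-- Tonelli: `∫ ∫₀^{u(t)} Φ(s) ds/s dt = ∫₀^∞ (Φ(s)/s) d(s; u) ds`. -/
lemma lintegral_layer {Φ : ℝ → ℝ} (hmono : MonotoneOn Φ (Ici (0:ℝ))) {u : ℝ → ℝ}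
    (hu : Measurable u) :
    ∫⁻ t, (∫⁻ s in Ioo (0:ℝ) (u t), weight Φ s) ∂lebR =
      ∫⁻ s, weight Φ s * lebR {t | s < u t} ∂lebR := by
  simp_rw [setLIntegral_Ioo_eq]
  rw [lintegral_lintegral_swap]
  · refine lintegral_congr fun s => ?_
    have hms : MeasurableSet {t | s < u t} := measurableSet_lt measurable_const hu
    rw [← lintegral_indicator_const hms]
    rfl
  · refine Measurable.aemeasurable ?_
    exact ((measurable_weight hmono).comp measurable_snd).indicator
      (s := {q : ℝ × ℝ | q.2 < u q.1}) (measurableSet_lt measurable_snd (hu.comp measurable_fst))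

/-- Tonelli on the side of `f`, followed by the integral condition on `Φ`. -/
lemma lintegral_weight_le {p : ℝ} {Φ : ℝ → ℝ} (hmono : MonotoneOn Φ (Ici (0:ℝ))) (h0 : Φ 0 = 0)
    (C : ℝ) (hC0 : 0 < C) (hC : ∀ t > (0:ℝ),
      (∫⁻ s in Ioo (0:ℝ) t, ENNReal.ofReal (s ^ (-p) * Φ s / s) ∂volume)
        ≤ ENNReal.ofReal (C * (t ^ (-p) * Φ t)))
    {f : ℝ → ℝ} (hf : Measurable f) (hf0 : 0 ≤ f) :
    ∫⁻ s, weight Φ s *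
        (∫⁻ x, {x | s < f x}.indicator (fun x => ENNReal.ofReal ((f x / s) ^ p)) x ∂lebR) ∂lebR
      ≤ ENNReal.ofReal C * ∫⁻ x, ENNReal.ofReal (Φ (f x)) ∂lebR := by
  have hind : ∀ s, Measurable
      ({x | s < f x}.indicator (fun x => ENNReal.ofReal ((f x / s) ^ p))) := fun s =>
    Measurable.indicator (by fun_prop) (measurableSet_lt measurable_const hf)
  simp_rw [← fun s => lintegral_const_mul (weight Φ s) (μ := lebR) (hind s)]
  rw [lintegral_lintegral_swap, ← lintegral_const_mul']
  rotate_left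
  · exact ENNReal.ofReal_ne_top
  · refine Measurable.aemeasurable ?_
    refine ((measurable_weight hmono).comp measurable_fst).mul ?_
    refine Measurable.indicator (s := {q : ℝ × ℝ | q.1 < f q.2})
      (f := fun q : ℝ × ℝ => ENNReal.ofReal ((f q.2 / q.1) ^ p)) ?_
      (measurableSet_lt measurable_fst (hf.comp measurable_snd))
    exact (((hf.comp measurable_snd).div measurable_fst).pow_const p).ennreal_ofReal
  refine lintegral_mono fun x => ?_
  have heq : ∀ s, weight Φ s *
      {x | s < f x}.indicator (fun x => ENNReal.ofReal ((f x / s) ^ p)) x =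
      (Iio (f x)).indicator (fun s => weight Φ s * ENNReal.ofReal ((f x / s) ^ p)) s := by
    intro s
    by_cases hs : s < f x
    · rw [indicator_of_mem (by exact hs), indicator_of_mem (by exact hs)]
    · rw [indicator_of_notMem (by exact hs), indicator_of_notMem (by exact hs), mul_zero]
  simp only [heq]
  rw [← setLIntegral_Ioo_eq]
  rcases (hf0 x).eq_or_lt with hx | hx
  · rw [← hx]; simp
  simp only [Pi.zero_apply] at hx
  calc ∫⁻ s in Ioo 0 (f x), weight Φ s * ENNReal.ofReal ((f x / s) ^ p)
      = ∫⁻ s in Ioo 0 (f x), ENNReal.ofReal (f x ^ p) *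
          ENNReal.ofReal (s ^ (-p) * Φ s / s) := by
        refine setLIntegral_congr_fun measurableSet_Ioo fun s hs => ?_
        have hs0 : 0 < s := hs.1
        have hΦs : 0 ≤ Φ s := by
          rw [← h0]; exact hmono (by simp) (mem_Ici.2 hs0.le) hs0.le
        simp only [weight, max_eq_left hs0.le]
        rw [← ENNReal.ofReal_mul (by positivity), ← ENNReal.ofReal_mul (by positivity),
          Real.div_rpow hx.le hs0.le, Real.rpow_neg hs0.le]
        congr 1
        field_simp
    _ = ENNReal.ofReal (f x ^ p) *
          ∫⁻ s in Ioo 0 (f x), ENNReal.ofReal (s ^ (-p) * Φ s / s) :=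
        lintegral_const_mul' _ _ ENNReal.ofReal_ne_top
    _ ≤ ENNReal.ofReal (f x ^ p) * ENNReal.ofReal (C * (f x ^ (-p) * Φ (f x))) := by
        gcongr; exact hC _ hx
    _ = ENNReal.ofReal C * ENNReal.ofReal (Φ (f x)) := by
        rw [← ENNReal.ofReal_mul (by positivity), ← ENNReal.ofReal_mul hC0.le,
          Real.rpow_neg hx.le]
        have : f x ^ p ≠ 0 := by positivity
        congr 1
        field_simp

/-- Φ-moment version of the key distribution inequality, case `q = ∞`.
If `Φ` is increasing, differentiable, vanishes at `0`, satisfies the global Δ₂-condition,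
`sup_{t>0} tΦ′(t)/Φ(t) < ∞`, and `∫_0^t s^{−p}Φ(s) ds/s ≤ C₂ t^{−p}Φ(t)` for all `t > 0`,
then there is `K > 0`, depending only on `p, α` and the data of `Φ`, such that whenever
`d(αv; g) ≤ d(v; Θ_{p,∞}(f))` for all `v > 0` (with `f ≥ 0`), one has
`∫_0^∞ Φ(|g(t)|) dt ≤ K ∫_0^∞ Φ(f(t)) dt`. -/
theorem stmt8 (p : ℝ) (hp : 0 < p)
    (Φ Φ' : ℝ → ℝ) (hΦmono : MonotoneOn Φ (Ici (0:ℝ))) (hΦ0 : Φ 0 = 0)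
    (hΦderiv : ∀ t > (0:ℝ), HasDerivAt Φ (Φ' t) t)
    (C₁ : ℝ) (hΔ₂ : ∀ t ≥ (0:ℝ), Φ (2 * t) ≤ C₁ * Φ t)
    (M : ℝ) (hM : ∀ t > (0:ℝ), t * Φ' t ≤ M * Φ t)
    (C₂ : ℝ) (hC₂ : ∀ t > (0:ℝ),
      (∫⁻ s in Ioo (0:ℝ) t, ENNReal.ofReal (s ^ (-p) * Φ s / s) ∂volume)
        ≤ ENNReal.ofReal (C₂ * (t ^ (-p) * Φ t)))
    (α : ℝ) (hα : 0 < α) :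
    ∃ K > (0:ℝ), ∀ f g : ℝ → ℝ, Measurable f → 0 ≤ f → Measurable g →
      (∀ v > (0:ℝ),
        lebR {t | α * v < |g t|} ≤ lebR2 {st : ℝ × ℝ | v < |f st.1 * thetaPInf p st.2|}) →
      ∫⁻ t, ENNReal.ofReal (Φ |g t|) ∂lebR
        ≤ ENNReal.ofReal K * ∫⁻ t, ENNReal.ofReal (Φ (f t)) ∂lebR := by
  have hnn : ∀ x ≥ (0:ℝ), 0 ≤ Φ x := fun x hx => by
    rw [← hΦ0]; exact hΦmono (by simp) (mem_Ici.2 hx) hx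
  -- For `Φ = 0` on `[0,∞)` the given `C₁`, `C₂` may be negative, so they are replaced by maxima.
  set A := max C₁ 1
  set C := max C₂ 1
  have hA : 0 < A := lt_max_of_lt_right one_pos
  have hC : 0 < C := lt_max_of_lt_right one_pos
  have hΔ : ∀ t ≥ (0:ℝ), Φ (2 * t) ≤ A * Φ t := fun t ht =>
    (hΔ₂ t ht).trans (mul_le_mul_of_nonneg_right (le_max_left _ _) (hnn t ht))
  have hC₂' : ∀ t > (0:ℝ),
      (∫⁻ s in Ioo (0:ℝ) t, ENNReal.ofReal (s ^ (-p) * Φ s / s) ∂volume)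
        ≤ ENNReal.ofReal (C * (t ^ (-p) * Φ t)) := fun t ht =>
    (hC₂ t ht).trans <| ENNReal.ofReal_le_ofReal <|
      mul_le_mul_of_nonneg_right (le_max_left _ _)
        (mul_nonneg (Real.rpow_nonneg ht.le _) (hnn t ht.le))
  obtain ⟨B, hB, hBΦ⟩ := exists_dilation_bound Φ hΦmono A hA hΔ α hα
  refine ⟨B * (2 * A) * C, by positivity, fun f g hf hf0 hg hd => ?_⟩
  have hpt : ∀ t, ENNReal.ofReal (Φ |g t|) ≤ ENNReal.ofReal (B * (2 * A)) *
      ∫⁻ s in Ioo (0:ℝ) (|g t| / α), weight Φ s := by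
    intro t
    calc ENNReal.ofReal (Φ |g t|) ≤ ENNReal.ofReal (B * Φ (|g t| / α)) :=
          ENNReal.ofReal_le_ofReal (hBΦ _ (abs_nonneg _))
      _ = ENNReal.ofReal B * ENNReal.ofReal (Φ (|g t| / α)) := ENNReal.ofReal_mul hB.le
      _ ≤ ENNReal.ofReal B * (ENNReal.ofReal (2 * A) *
            ∫⁻ s in Ioo (0:ℝ) (|g t| / α), ENNReal.ofReal (Φ s / s)) := by
          gcongr; exact phi_le_lintegral Φ hΦmono hΦ0 A hA hΔ _ (by positivity)
      _ = _ := by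
          rw [ENNReal.ofReal_mul hB.le, mul_assoc]
          congr 2
          refine setLIntegral_congr_fun measurableSet_Ioo fun s hs => ?_
          simp only [weight, max_eq_left hs.1.le]
  calc ∫⁻ t, ENNReal.ofReal (Φ |g t|) ∂lebR
      ≤ ∫⁻ t, ENNReal.ofReal (B * (2 * A)) *
          (∫⁻ s in Ioo (0:ℝ) (|g t| / α), weight Φ s) ∂lebR := lintegral_mono hpt
    _ = ENNReal.ofReal (B * (2 * A)) *
          ∫⁻ s, weight Φ s * lebR {t | s < |g t| / α} ∂lebR := by
        rw [lintegral_const_mul' _ _ ENNReal.ofReal_ne_top,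
          lintegral_layer hΦmono (hg.abs.div_const α)]
    _ ≤ ENNReal.ofReal (B * (2 * A)) * ∫⁻ s, weight Φ s *
          (∫⁻ x, {x | s < f x}.indicator (fun x => ENNReal.ofReal ((f x / s) ^ p)) x ∂lebR)
            ∂lebR := by
        gcongr ENNReal.ofReal (B * (2 * A)) * ?_
        refine setLIntegral_mono' measurableSet_Ioi fun s hs => ?_
        gcongr weight Φ s * ?_
        have hset : {t | s < |g t| / α} = {t | α * s < |g t|} := by
          ext t; simp only [mem_ofPred_eq]; rw [lt_div_iff₀ hα, mul_comm]
        rw [hset]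
        exact (hd s hs).trans (lebR2_le hp hf hf0 hs)
    _ ≤ ENNReal.ofReal (B * (2 * A)) *
          (ENNReal.ofReal C * ∫⁻ x, ENNReal.ofReal (Φ (f x)) ∂lebR) := by
        gcongr; exact lintegral_weight_le hΦmono hΦ0 C hC hC₂' hf hf0
    _ = _ := by rw [← mul_assoc, ← ENNReal.ofReal_mul (by positivity)]
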